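/- Let m, n be positive integers and a, b, c integers. For i ∈ (ℤ/mℤ) × (ℤ/nℤ) write i₁ ∈ {0,…,m−1} and i₂ ∈ {0,…,n−1} for the canonical integer representatives of its two components, and define ω(i,j,k) := exp(2πi·(a·i₁·⌊(j₁+k₁)/m⌋)/m) · exp(2πi·(b·i₂·⌊(j₁+k₁)/m⌋ + c·i₂·⌊(j₂+k₂)/n⌋)/n) ∈ U(1), where the sums j₁+k₁ and j₂+k₂ are taken in ℤ (not reduced). Then ω is a normalized U(1)-valued 3-cocycle on the group (ℤ/mℤ) × (ℤ/nℤ): ω(i,j,k) = 1 whenever i, j, or k is zero, and ω(i·j,k,l)·ω(i,j,k·l) = ω(j,k,l)·ω(i,j·k,l)·ω(i,j,k) for all i,j,k,l, where · is addition in (ℤ/mℤ) × (ℤ/nℤ). -/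

import Mathlib

open scoped Real

/-!
The factor `exp (2πi x / N)` is the standard character of `ℤ/N` evaluated at the class of `x`, so
`ω i j k` is additive in the class of `i`: it is the pairing of `i` with the vector of the carries
produced by the additions `j₁ + k₁` and `j₂ + k₂`.  Carrying is a 2-cocycle, because `N` times the
carry is the coboundary of the representative `ℤ/N → ℤ` and `ℤ` has no `N`-torsion.  Pairing a
group element with a 2-cocycle, i.e. taking the cup product with the tautological 1-cocycle `id`,
gives a 3-cocycle.
-/

/-- Normalized 2-cocycles on an additive group `G` with values in an additive group `H` on which
`G` acts trivially, as curried functions. -/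
structure IsNormalizedTwoCocycle {G H : Type*} [AddZeroClass G] [AddZeroClass H]
    (f : G → G → H) : Prop where
  zero_left : ∀ x, f 0 x = 0
  zero_right : ∀ x, f x 0 = 0
  cocycle : ∀ x y z, f x (y + z) + f y z = f (x + y) z + f x y

/-- Normalized 3-cocycles on an additive group `G` with values in a multiplicative group `A` on
which `G` acts trivially, as curried functions. -/
structure IsNormalizedThreeCocycle {G A : Type*} [AddZeroClass G] [MulOneClass A]
    (ω : G → G → G → A) : Prop where
  eq_one : ∀ i j k, i = 0 ∨ j = 0 ∨ k = 0 → ω i j k = 1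
  cocycle : ∀ i j k l, ω (i + j) k l * ω i j (k + l) = ω j k l * ω i (j + k) l * ω i j k

namespace IsNormalizedTwoCocycle

theorem prodMap {G G' H H' : Type*} [AddZeroClass G] [AddZeroClass G'] [AddZeroClass H]
    [AddZeroClass H'] {f : G → G → H} {f' : G' → G' → H'} (hf : IsNormalizedTwoCocycle f)
    (hf' : IsNormalizedTwoCocycle f') :
    IsNormalizedTwoCocycle fun x y : G × G' ↦ (f x.1 y.1, f' x.2 y.2) where
  zero_left x := Prod.ext (hf.zero_left x.1) (hf'.zero_left x.2)
  zero_right x := Prod.ext (hf.zero_right x.1) (hf'.zero_right x.2)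
  cocycle x y z := Prod.ext (hf.cocycle x.1 y.1 z.1) (hf'.cocycle x.2 y.2 z.2)

theorem cup {G H A : Type*} [AddZeroClass G] [AddMonoid H] [CommMonoid A] {f : G → G → H}
    (hf : IsNormalizedTwoCocycle f) (φ : G →+ AddChar H A) :
    IsNormalizedThreeCocycle fun i j k ↦ φ i (f j k) where
  eq_one := by
    rintro i j k (rfl | rfl | rfl)
    · rw [map_zero, AddChar.zero_apply]
    · rw [hf.zero_left, AddChar.map_zero_eq_one]
    · rw [hf.zero_right, AddChar.map_zero_eq_one]
  cocycle i j k l :=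
    calc φ (i + j) (f k l) * φ i (f j (k + l))
      _ = φ j (f k l) * φ i (f j (k + l) + f k l) := by
        rw [map_add, AddChar.add_apply, AddChar.map_add_eq_mul]
        rw [mul_right_comm, mul_comm, mul_comm (φ i (f k l))]
      _ = φ j (f k l) * φ i (f (j + k) l) * φ i (f j k) := by
        rw [hf.cocycle, AddChar.map_add_eq_mul, mul_assoc]

end IsNormalizedTwoCocycle

/-- The carry `⌊(x + y) / m⌋` in the addition of the canonical representatives of two residue
classes. -/
def carry {m : ℕ} (x y : ZMod m) : ℤ :=
  ((x.val : ℤ) + (y.val : ℤ)).fdiv m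

theorem val_add_add_mul_carry {m : ℕ} [NeZero m] (x y : ZMod m) :
    ((x + y).val : ℤ) + m * carry x y = x.val + y.val := by
  rw [carry, ZMod.val_add, Int.fdiv_eq_ediv_of_nonneg _ (Int.natCast_nonneg m)]
  push_cast
  exact Int.emod_add_mul_ediv _ _

theorem carry_comm {m : ℕ} (x y : ZMod m) : carry x y = carry y x := by
  rw [carry, carry, add_comm]

theorem zero_carry {m : ℕ} [NeZero m] (x : ZMod m) : carry 0 x = 0 := by
  have h := val_add_add_mul_carry 0 x
  simpa only [zero_add, ZMod.val_zero, Nat.cast_zero, add_eq_left, mul_eq_zero, Nat.cast_eq_zero,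
    NeZero.ne m, false_or] using h

theorem carry_isNormalizedTwoCocycle (m : ℕ) [NeZero m] :
    IsNormalizedTwoCocycle (carry (m := m)) where
  zero_left := zero_carry
  zero_right x := by rw [carry_comm, zero_carry]
  cocycle x y z := by
    have hm : (m : ℤ) ≠ 0 := Nat.cast_ne_zero.mpr (NeZero.ne m)
    have hx_yz := val_add_add_mul_carry x (y + z)
    rw [← add_assoc] at hx_yz
    apply mul_left_cancel₀ hm
    linarith [val_add_add_mul_carry y z, val_add_add_mul_carry (x + y) z,
      val_add_add_mul_carry x y]

theorem circleExp_two_pi_mul_div (N : ℕ) [NeZero N] (x : ℤ) :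
    Circle.exp (2 * π * x / N) = ZMod.toCircle (x : ZMod N) := by
  apply Circle.ext
  rw [ZMod.toCircle_intCast, Circle.coe_exp]
  push_cast
  ring_nf

/-- The biadditive pairing of `(ℤ/m) × (ℤ/n)` with the group `ℤ × ℤ` of carry vectors whose cup
product with the carry cocycle is `ω_{a,b,c}`.  It is curried as a homomorphism into the character
group of `ℤ × ℤ`. -/
noncomputable def carryPairing (m n : ℕ) [NeZero m] [NeZero n] (a b c : ℤ) :
    ZMod m × ZMod n →+ AddChar (ℤ × ℤ) Circle where
  toFun i :=
    { toFun := fun s ↦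
        ZMod.toCircle (N := m) (a * i.1 * s.1) *
          ZMod.toCircle (N := n) (b * i.2 * s.1 + c * i.2 * s.2)
      map_zero_eq_one' := by simp
      map_add_eq_mul' := fun s t ↦ by
        rw [mul_mul_mul_comm, ← AddChar.map_add_eq_mul, ← AddChar.map_add_eq_mul, Prod.fst_add,
          Prod.snd_add]
        push_cast
        ring_nf }
  map_zero' := by ext; simp
  map_add' i j := by
    ext1 s
    simp only [AddChar.add_apply, AddChar.coe_mk, Prod.fst_add, Prod.snd_add]
    rw [mul_mul_mul_comm, ← AddChar.map_add_eq_mul, ← AddChar.map_add_eq_mul]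
    ring_nf

theorem carryPairing_apply {m n : ℕ} [NeZero m] [NeZero n] (a b c : ℤ) (i : ZMod m × ZMod n)
    (s : ℤ × ℤ) :
    carryPairing m n a b c i s =
      Circle.exp (2 * π * ((a * (i.1.val : ℤ) * s.1 : ℤ) : ℝ) / m) *
      Circle.exp (2 * π *
        ((b * (i.2.val : ℤ) * s.1 + c * (i.2.val : ℤ) * s.2 : ℤ) : ℝ) / n) := by
  rw [circleExp_two_pi_mul_div, circleExp_two_pi_mul_div]
  push_cast
  rw [ZMod.natCast_zmod_val, ZMod.natCast_zmod_val]
  rfl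

/-- The explicit formula `ω_{a,b,c}` defines a normalized `U(1)`-valued
3-cocycle on `(ℤ/mℤ) × (ℤ/nℤ)`.  Here `i₁, i₂` denote the canonical integer representatives of
the two components (sums of representatives being taken in `ℤ`, not reduced) and `Int.fdiv` is
floor division, so `Int.fdiv x m = ⌊x/m⌋`. -/
theorem omega_abc_is_normalized_three_cocycle
    (m n : ℕ) (hm : 0 < m) (hn : 0 < n) (a b c : ℤ)
    (ω : ZMod m × ZMod n → ZMod m × ZMod n → ZMod m × ZMod n → Circle)
    (hω : ∀ i j k : ZMod m × ZMod n,
      ω i j k =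
        Circle.exp (2 * π *
            ((a * (i.1.val : ℤ) * (((j.1.val : ℤ) + (k.1.val : ℤ)).fdiv m) : ℤ) : ℝ) / m) *
        Circle.exp (2 * π *
            ((b * (i.2.val : ℤ) * (((j.1.val : ℤ) + (k.1.val : ℤ)).fdiv m)
              + c * (i.2.val : ℤ) * (((j.2.val : ℤ) + (k.2.val : ℤ)).fdiv n) : ℤ) : ℝ) / n)) :
    (∀ i j k : ZMod m × ZMod n, i = 0 ∨ j = 0 ∨ k = 0 → ω i j k = 1) ∧
    (∀ i j k l : ZMod m × ZMod n,
      ω (i + j) k l * ω i j (k + l) = ω j k l * ω i (j + k) l * ω i j k) := by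
  have : NeZero m := ⟨hm.ne'⟩
  have : NeZero n := ⟨hn.ne'⟩
  have ω_eq_cup : ω = fun i j k ↦ carryPairing m n a b c i (carry j.1 k.1, carry j.2 k.2) := by
    funext i j k
    rw [hω, carryPairing_apply, carry, carry]
  have hcarry := (carry_isNormalizedTwoCocycle m).prodMap (carry_isNormalizedTwoCocycle n)
  have hcup := hcarry.cup (carryPairing m n a b c)
  rw [ω_eq_cup]
  exact ⟨hcup.eq_one, hcup.cocycle⟩
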